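/- Let f : ℝⁿ → ℝ be a differentiable convex function with f(0) = 0 and f(x) ≥ 0 for all x, and let g : ℝⁿ → ℝ be a differentiable convex function. Let α, β : [0,∞) → ℝ be differentiable functions satisfying exp(α(t)) ≥ β'(t) > 0 for all t ≥ 0. Suppose Z : [0,∞) → ℝⁿ is differentiable and the curve t ↦ ∇g(Z(t)) is differentiable with derivative (d/dt)∇g(Z(t)) = −exp(α(t)+β(t))·∇f(Z(t)) for every t ≥ 0. Then the energy Ẽ(t) = D_g(0, Z(t)) + exp(β(t))·f(Z(t)) is monotonically non-increasing on [0,∞), and f(Z(t)) ≤ exp(−β(t))·Ẽ(0) for all t ≥ 0. -/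

import Mathlib

open Set RealInnerProductSpace

/-- Bregman divergence `D_g(y, x) = g(y) − g(x) − ⟨∇g(x), y − x⟩`, where `g'`
is the gradient map of `g`. -/
noncomputable def breg {n : ℕ} (g : EuclideanSpace ℝ (Fin n) → ℝ)
    (g' : EuclideanSpace ℝ (Fin n) → EuclideanSpace ℝ (Fin n))
    (y x : EuclideanSpace ℝ (Fin n)) : ℝ :=
  g y - g x - ⟪g' x, y - x⟫

/-!
Along a solution the energy has derivative
`e^β (β' f(Z) - e^α ⟨∇f(Z), Z - p⟩ + ⟨∇f(Z), Z'⟩)`. The first two terms are together nonpositive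
since `β' ≤ e^α` and `0 ≤ f(x) ≤ ⟨∇f(x), x - p⟩`, the latter by convexity and `f(p) = 0`. For the
third, `∇g` is monotone, so `⟨(∇g(Z))', Z'⟩ ≥ 0` as a limit of nonnegative difference quotients,
without any second derivative of `g`; and `(∇g(Z))'` is a negative multiple of `∇f(Z)`. Finally
`D_g(p, Z) ≥ 0`, so the energy dominates `e^β f(Z)`.
-/

theorem add_fderivWithin_sub_le_of_convexOn {V : Type*} [NormedAddCommGroup V] [NormedSpace ℝ V]
    {s : Set V} {f : V → ℝ} {f' : V →L[ℝ] ℝ} {x y : V} (hfc : ConvexOn ℝ s f)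
    (hf : HasFDerivWithinAt f f' s x) (hx : x ∈ s) (hy : y ∈ s) :
    f x + f' (y - x) ≤ f y := by
  let l : ℝ →ᵃ[ℝ] V := AffineMap.lineMap x y
  have hderiv : HasDerivWithinAt (f ∘ l) (f' (y - x)) (l ⁻¹' s) 0 :=
    hf.comp_hasDerivWithinAt_of_eq 0 AffineMap.hasDerivWithinAt_lineMap (mapsTo_preimage l s)
      (AffineMap.lineMap_apply_zero x y).symm
  have hslope : f' (y - x) ≤ slope (f ∘ l) 0 1 :=
    (hfc.comp_affineMap l).le_slope_of_hasDerivWithinAt (by simpa [l] using hx)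
      (by simpa [l] using hy) one_pos hderiv
  have : slope (f ∘ l) 0 1 = f y - f x := by simp [l, slope_def_field]
  linarith

section Bregman

variable {F : Type*} [NormedAddCommGroup F] [InnerProductSpace ℝ F]

/-- The Bregman divergence `D_g(y, x)` on a real inner product space. As in `breg`, the gradient
map `g'` of `g` is a separate argument. -/
noncomputable def bregmanDiv (g : F → ℝ) (g' : F → F) (y x : F) : ℝ :=
  g y - g x - ⟪g' x, y - x⟫

/-- The Lyapunov energy `D_g(p, Z(t)) + e^{β(t)} f(Z(t))` of a curve `Z` relative to the base
point `p`; the gradient map `g'` of `g` is a separate argument. -/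
noncomputable def lyapunovEnergy (f g : F → ℝ) (g' : F → F) (p : F) (β : ℝ → ℝ) (Z : ℝ → F)
    (t : ℝ) : ℝ :=
  bregmanDiv g g' p (Z t) + Real.exp (β t) * f (Z t)

theorem bregmanDiv_add_bregmanDiv_swap (g : F → ℝ) (g' : F → F) (x y : F) :
    bregmanDiv g g' y x + bregmanDiv g g' x y = ⟪g' y - g' x, y - x⟫ := by
  simp only [bregmanDiv, inner_sub_left, inner_sub_right]
  ring

theorem inner_deriv_nonneg_of_inner_sub_nonneg {W Z : ℝ → F} {w z : F} {t : ℝ}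
    (hmono : ∀ u, 0 ≤ ⟪W u - W t, Z u - Z t⟫) (hW : HasDerivAt W w t) (hZ : HasDerivAt Z z t) :
    0 ≤ ⟪w, z⟫ := by
  refine ge_of_tendsto' (hW.tendsto_slope.inner hZ.tendsto_slope) fun u => ?_
  simp only [slope, vsub_eq_sub, real_inner_smul_left, real_inner_smul_right, ← mul_assoc]
  exact mul_nonneg (mul_self_nonneg _) (hmono u)

theorem lyapunovEnergy_deriv_nonpos {a b c y : ℝ} {v x z p : F} (hba : b ≤ Real.exp a)
    (hy : 0 ≤ y) (hyv : y ≤ ⟪v, x - p⟫) (hvz : ⟪v, z⟫ ≤ 0) :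
    ⟪-Real.exp (a + c) • v, x - p⟫ + Real.exp c * (b * y + ⟪v, z⟫) ≤ 0 := by
  have hby : b * y ≤ Real.exp a * ⟪v, x - p⟫ := mul_le_mul hba hyv hy (Real.exp_pos a).le
  calc ⟪-Real.exp (a + c) • v, x - p⟫ + Real.exp c * (b * y + ⟪v, z⟫)
      = Real.exp c * (b * y - Real.exp a * ⟪v, x - p⟫ + ⟪v, z⟫) := by
        rw [real_inner_smul_left, Real.exp_add]
        ring
    _ ≤ 0 := mul_nonpos_of_nonneg_of_nonpos (Real.exp_pos c).le (by linarith)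

variable [CompleteSpace F]

theorem le_inner_gradient_sub_of_convexOn {s : Set F} {f : F → ℝ} {v x p : F}
    (hfc : ConvexOn ℝ s f) (hf : HasGradientAt f v x) (hx : x ∈ s) (hp : p ∈ s)
    (hfp : f p = 0) : f x ≤ ⟪v, x - p⟫ := by
  have := add_fderivWithin_sub_le_of_convexOn hfc hf.hasFDerivAt.hasFDerivWithinAt hx hp
  rw [InnerProductSpace.toDual_apply_apply, ← neg_sub, inner_neg_right] at this
  linarith

theorem bregmanDiv_nonneg {s : Set F} {g : F → ℝ} {g' : F → F} {x y : F}
    (hgc : ConvexOn ℝ s g) (hg : HasGradientAt g (g' x) x) (hx : x ∈ s) (hy : y ∈ s) :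
    0 ≤ bregmanDiv g g' y x := by
  have := add_fderivWithin_sub_le_of_convexOn hgc hg.hasFDerivAt.hasFDerivWithinAt hx hy
  rw [InnerProductSpace.toDual_apply_apply] at this
  rw [bregmanDiv]
  linarith

theorem inner_gradient_sub_nonneg {s : Set F} {g : F → ℝ} {g' : F → F}
    (hgc : ConvexOn ℝ s g) (hg : ∀ x ∈ s, HasGradientAt g (g' x) x) {x y : F}
    (hx : x ∈ s) (hy : y ∈ s) : 0 ≤ ⟪g' y - g' x, y - x⟫ := by
  rw [← bregmanDiv_add_bregmanDiv_swap g]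
  exact add_nonneg (bregmanDiv_nonneg hgc (hg x hx) hx hy) (bregmanDiv_nonneg hgc (hg y hy) hy hx)

theorem hasDerivWithinAt_comp_of_hasGradientAt {f : F → ℝ} {v : F} {Z : ℝ → F} {z : F}
    {s : Set ℝ} {t : ℝ} (hf : HasGradientAt f v (Z t)) (hZ : HasDerivWithinAt Z z s t) :
    HasDerivWithinAt (fun u => f (Z u)) ⟪v, z⟫ s t :=
  hf.hasFDerivAt.comp_hasDerivWithinAt t hZ

/-- The two occurrences of `⟨∇g(Z), Z'⟩` cancel, so the velocity of `Z` drops out. -/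
theorem hasDerivWithinAt_bregmanDiv {g : F → ℝ} {g' : F → F} {Z : ℝ → F} {z w : F}
    {s : Set ℝ} {t : ℝ} (p : F) (hg : HasGradientAt g (g' (Z t)) (Z t))
    (hZ : HasDerivWithinAt Z z s t) (hW : HasDerivWithinAt (fun u => g' (Z u)) w s t) :
    HasDerivWithinAt (fun u => bregmanDiv g g' p (Z u)) ⟪w, Z t - p⟫ s t := by
  have hgZ := hasDerivWithinAt_comp_of_hasGradientAt hg hZ
  refine ((hgZ.const_sub (g p)).sub (hW.inner ℝ (hZ.const_sub p))).congr_deriv ?_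
  simp only [inner_neg_right, inner_sub_right]
  ring

theorem hasDerivWithinAt_lyapunovEnergy {f g : F → ℝ} {g' : F → F} {β : ℝ → ℝ} {b : ℝ}
    {Z : ℝ → F} {v w z : F} {s : Set ℝ} {t : ℝ} (p : F) (hf : HasGradientAt f v (Z t))
    (hg : HasGradientAt g (g' (Z t)) (Z t)) (hβ : HasDerivWithinAt β b s t)
    (hZ : HasDerivWithinAt Z z s t) (hW : HasDerivWithinAt (fun u => g' (Z u)) w s t) :
    HasDerivWithinAt (lyapunovEnergy f g g' p β Z)
      (⟪w, Z t - p⟫ + Real.exp (β t) * (b * f (Z t) + ⟪v, z⟫)) s t := by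
  have hfZ := hasDerivWithinAt_comp_of_hasGradientAt hf hZ
  refine ((hasDerivWithinAt_bregmanDiv p hg hZ hW).add (hβ.exp.mul hfZ)).congr_deriv ?_
  ring

theorem inner_gradient_velocity_nonpos {g : F → ℝ} {g' : F → F} {Z : ℝ → F} {v z : F} {c t : ℝ}
    (hgc : ConvexOn ℝ univ g) (hg : ∀ x, HasGradientAt g (g' x) x) (hc : 0 < c)
    (hZ : HasDerivAt Z z t) (hW : HasDerivAt (fun u => g' (Z u)) (-c • v) t) :
    ⟪v, z⟫ ≤ 0 := by
  have hmono (u : ℝ) : 0 ≤ ⟪g' (Z u) - g' (Z t), Z u - Z t⟫ :=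
    inner_gradient_sub_nonneg hgc (fun x _ => hg x) (mem_univ _) (mem_univ _)
  have hinner := inner_deriv_nonneg_of_inner_sub_nonneg hmono hW hZ
  rw [real_inner_smul_left, neg_mul, Left.nonneg_neg_iff] at hinner
  exact nonpos_of_mul_nonpos_right hinner hc

theorem le_exp_neg_mul_lyapunovEnergy {f g : F → ℝ} {g' : F → F} {p : F} {β : ℝ → ℝ} {Z : ℝ → F}
    {t : ℝ} (hg : HasGradientAt g (g' (Z t)) (Z t)) (hgc : ConvexOn ℝ univ g) :
    f (Z t) ≤ Real.exp (-β t) * lyapunovEnergy f g g' p β Z t := by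
  rw [Real.exp_neg, le_inv_mul_iff₀ (Real.exp_pos _), lyapunovEnergy]
  exact le_add_of_nonneg_left (bregmanDiv_nonneg hgc hg (mem_univ _) (mem_univ _))

theorem godec_a_one_energy_decay_general {D : Set ℝ} (hD : Convex ℝ D) {f g : F → ℝ}
    {f' g' : F → F} {p : F} (hf : ∀ x, HasGradientAt f (f' x) x)
    (hg : ∀ x, HasGradientAt g (g' x) x) (hfp : ∀ x, f x ≤ ⟪f' x, x - p⟫) (hfnn : ∀ x, 0 ≤ f x)
    (hgc : ConvexOn ℝ univ g)
    {α β β' : ℝ → ℝ} (hβ : ∀ t ∈ D, HasDerivWithinAt β (β' t) D t)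
    (hscale : ∀ t ∈ D, β' t ≤ Real.exp (α t))
    {Z Z' : ℝ → F} (hZ : ∀ t ∈ D, HasDerivWithinAt Z (Z' t) D t)
    (hODE : ∀ t ∈ D,
      HasDerivWithinAt (fun u => g' (Z u)) (-Real.exp (α t + β t) • f' (Z t)) D t) :
    AntitoneOn (lyapunovEnergy f g g' p β Z) D ∧ ∀ t₀ ∈ D, ∀ t ∈ D, t₀ ≤ t →
      f (Z t) ≤ Real.exp (-β t) * lyapunovEnergy f g g' p β Z t₀ := by
  have hanti : AntitoneOn (lyapunovEnergy f g g' p β Z) D := by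
    have hderiv (t : ℝ) (ht : t ∈ D) :=
      hasDerivWithinAt_lyapunovEnergy p (hf (Z t)) (hg (Z t)) (hβ t ht) (hZ t ht) (hODE t ht)
    refine antitoneOn_of_hasDerivWithinAt_nonpos hD (fun t ht => (hderiv t ht).continuousWithinAt)
      (fun t ht => (hderiv t (interior_subset ht)).mono interior_subset) fun t ht => ?_
    have htD := interior_subset ht
    have hD_nhds := mem_interior_iff_mem_nhds.1 ht
    have hvelocity : ⟪f' (Z t), Z' t⟫ ≤ 0 :=
      inner_gradient_velocity_nonpos hgc hg (Real.exp_pos _) ((hZ t htD).hasDerivAt hD_nhds)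
        ((hODE t htD).hasDerivAt hD_nhds)
    exact lyapunovEnergy_deriv_nonpos (hscale t htD) (hfnn _) (hfp _) hvelocity
  refine ⟨hanti, fun t₀ ht₀ t ht htt => ?_⟩
  calc f (Z t) ≤ Real.exp (-β t) * lyapunovEnergy f g g' p β Z t :=
        le_exp_neg_mul_lyapunovEnergy (hg _) hgc
    _ ≤ Real.exp (-β t) * lyapunovEnergy f g g' p β Z t₀ := by
        gcongr
        exact hanti ht₀ ht htt

end Bregman

/-- Lyapunov convergence of (G-ODE-C) specialized to `a(t) ≡ 1`, i.e. the single-variable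
dynamics `(d/dt)∇g(Z) = −e^{α+β}∇f(Z)`, in the convex case. -/
theorem godec_a_one_energy_decay {n : ℕ}
    (f g : EuclideanSpace ℝ (Fin n) → ℝ)
    (f' g' : EuclideanSpace ℝ (Fin n) → EuclideanSpace ℝ (Fin n))
    (hf' : ∀ x, HasGradientAt f (f' x) x)
    (hg' : ∀ x, HasGradientAt g (g' x) x)
    (hfconv : ConvexOn ℝ univ f)
    (hgconv : ConvexOn ℝ univ g)
    (hf0 : f 0 = 0)
    (hfnn : ∀ x, 0 ≤ f x)
    (α β α' β' : ℝ → ℝ)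
    (hα : ∀ t, 0 ≤ t → HasDerivAt α (α' t) t)
    (hβ : ∀ t, 0 ≤ t → HasDerivAt β (β' t) t)
    (hscale : ∀ t, 0 ≤ t → 0 < β' t ∧ β' t ≤ Real.exp (α t))
    (Z Z' : ℝ → EuclideanSpace ℝ (Fin n))
    (hZ : ∀ t, 0 ≤ t → HasDerivAt Z (Z' t) t)
    (hODE : ∀ t, 0 ≤ t →
      HasDerivAt (fun u => g' (Z u)) (-(Real.exp (α t + β t)) • f' (Z t)) t)
    (E : ℝ → ℝ)
    (hE : ∀ t, E t = breg g g' 0 (Z t) + Real.exp (β t) * f (Z t)) :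
    AntitoneOn E (Ici 0) ∧ ∀ t, 0 ≤ t → f (Z t) ≤ Real.exp (-β t) * E 0 := by
  obtain rfl : E = lyapunovEnergy f g g' 0 β Z := funext hE
  have hf_le (x) : f x ≤ ⟪f' x, x - 0⟫ :=
    le_inner_gradient_sub_of_convexOn hfconv (hf' x) (mem_univ x) (mem_univ 0) hf0
  have hdecay := godec_a_one_energy_decay_general (convex_Ici 0) hf' hg' hf_le hfnn hgconv
    (fun t ht => (hβ t ht).hasDerivWithinAt) (fun t ht => (hscale t ht).2)
    (fun t ht => (hZ t ht).hasDerivWithinAt) (fun t ht => (hODE t ht).hasDerivWithinAt)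
  exact ⟨hdecay.1, fun t ht => hdecay.2 0 self_mem_Ici t ht ht⟩
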